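/- Fix a balanced σ ∈ {±1}^n and let ℋ be sampled from HSBM(n,p,q;k) conditionally on σ. Then the variance parameter σ² := ‖ ∑_{e ∈ C([n],k)} E[((A_ℋ)_e − E(A_ℋ)_e)²] · (Π((1_eᵀσ_e)·diag(σ_e) − σ_eσ_eᵀ)Π)² ‖ (operator norm) satisfies σ² ≤ 2(k−1)((k/2^k)α + (1 − k/2^k)β) log n + O(log n / n). -/

import Mathlib

open Finset Filter Matrix

open scoped Classical

/-- The `k`-element subsets of `[n]`, i.e. the potential hyperedges. -/
abbrev KSet (n k : ℕ) := {e : Finset (Fin n) // e.card = k}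

/-- A `±1` label vector (encoded by `Bool`) is balanced if it has equally many
`+1`'s (`true`) and `-1`'s (`false`). -/
abbrev balanced {n : ℕ} (σ : Fin n → Bool) : Prop :=
  2 * (Finset.univ.filter (fun i => σ i = true)).card = n

/-- `e` is in-cluster w.r.t. `σ`: `σ` is constant on `e`. -/
abbrev inCluster {n : ℕ} (σ : Fin n → Bool) (e : Finset (Fin n)) : Prop :=
  ∀ i ∈ e, ∀ j ∈ e, σ i = σ j

/-- Probability that `e` appears as an edge, given the labels `σ`. -/
noncomputable def edgeP {n : ℕ} (p q : ℝ) (σ : Fin n → Bool) (e : Finset (Fin n)) : ℝ :=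
  if inCluster σ e then p else q

/-- Probability of observing exactly the hypergraph with edge-indicator `E`, given labels `σ`
(edges appear independently). -/
noncomputable def hypProb {n k : ℕ} (p q : ℝ) (σ : Fin n → Bool) (E : KSet n k → Bool) : ℝ :=
  ∏ e : KSet n k, if E e then edgeP p q σ e.1 else 1 - edgeP p q σ e.1

/-- Uniform prior on balanced label vectors. -/
noncomputable def sigProb (n : ℕ) (σ : Fin n → Bool) : ℝ :=
  if balanced σ then 1 / ((Finset.univ.filter (fun τ : Fin n → Bool => balanced τ)).card : ℝ)
  else 0

/-- Probability of an event `P` under the joint law `HSBM(n,p,q;k)` of `(σ, ℋ)`. -/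
noncomputable def prEvent (n k : ℕ) (p q : ℝ)
    (P : (Fin n → Bool) → (KSet n k → Bool) → Prop) : ℝ :=
  ∑ σ : Fin n → Bool, ∑ E : KSet n k → Bool,
    sigProb n σ * hypProb p q σ E * (if P σ E then 1 else 0)

/-- Global sign flip. -/
def negB {n : ℕ} (σ : Fin n → Bool) : Fin n → Bool := fun i => !(σ i)

/-- The edge probability parameter `α · log n / C(n-1, k-1)`. -/
noncomputable def pParam (k : ℕ) (α : ℝ) (n : ℕ) : ℝ :=
  α * Real.log n / ((n - 1).choose (k - 1) : ℝ)

/-- The real `±1` vector associated to a Boolean label vector. -/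
def sgn {n : ℕ} (σ : Fin n → Bool) : Fin n → ℝ := fun i => if σ i then 1 else -1

/-- The rank-one matrix `σσᵀ`. -/
noncomputable def outer {n : ℕ} (σ : Fin n → Bool) : Matrix (Fin n) (Fin n) ℝ :=
  Matrix.of fun i j => sgn σ i * sgn σ j

/-- The weighted adjacency matrix `W(H)`: `W i j` is the number of hyperedges containing
both `i` and `j` (zero on the diagonal). -/
noncomputable def Wmat {n k : ℕ} (E : KSet n k → Bool) : Matrix (Fin n) (Fin n) ℝ :=
  Matrix.of fun i j => if i = j then 0 else
    ((Finset.univ.filter (fun e : KSet n k => E e = true ∧ i ∈ e.1 ∧ j ∈ e.1)).card : ℝ)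

/-- Feasibility for the SDP relaxation: `X ⪰ 0`, unit diagonal, `⟨X, 𝟙𝟙ᵀ⟩ = 0`. -/
def sdpFeasible {n : ℕ} (X : Matrix (Fin n) (Fin n) ℝ) : Prop :=
  X.PosSemidef ∧ (∀ i, X i i = 1) ∧ (∑ i, ∑ j, X i j) = 0

/-- The SDP objective `⟨W, X⟩`. -/
noncomputable def sdpObj {n : ℕ} (W X : Matrix (Fin n) (Fin n) ℝ) : ℝ :=
  ∑ i, ∑ j, W i j * X i j

/-- `Xs` is the unique optimal solution of the SDP with input `W`. -/
def sdpUniqueOpt {n : ℕ} (W Xs : Matrix (Fin n) (Fin n) ℝ) : Prop :=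
  sdpFeasible Xs ∧ ∀ X, sdpFeasible X → X ≠ Xs → sdpObj W X < sdpObj W Xs

/-- `Γ = diag(σ) W diag(σ)`. -/
noncomputable def GammaM {n : ℕ} (σ : Fin n → Bool) (W : Matrix (Fin n) (Fin n) ℝ) :
    Matrix (Fin n) (Fin n) ℝ :=
  Matrix.diagonal (sgn σ) * W * Matrix.diagonal (sgn σ)

/-- The Laplacian `L_Γ = diag(Γ𝟙) - Γ`. -/
noncomputable def LGamma {n : ℕ} (σ : Fin n → Bool) (W : Matrix (Fin n) (Fin n) ℝ) :
    Matrix (Fin n) (Fin n) ℝ :=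
  Matrix.diagonal (fun i => ∑ j, GammaM σ W i j) - GammaM σ W

/-- `Π = I - (1/n)𝟙𝟙ᵀ - (1/n)σσᵀ`, the projector onto `span{𝟙, σ}ᗮ`. -/
noncomputable def PiM {n : ℕ} (σ : Fin n → Bool) : Matrix (Fin n) (Fin n) ℝ :=
  1 - (n : ℝ)⁻¹ • Matrix.of (fun _ _ => (1 : ℝ)) - (n : ℝ)⁻¹ • outer σ

/-- The third-smallest eigenvalue of a symmetric matrix, via the Courant–Fischer
max–min characterization over subspaces of dimension `n - 2`. -/
noncomputable def lambda3 {n : ℕ} (M : Matrix (Fin n) (Fin n) ℝ) : ℝ :=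
  sSup {r : ℝ | ∃ V : Submodule ℝ (Fin n → ℝ), Module.finrank ℝ V = n - 2 ∧
    ∀ x ∈ V, r * (∑ i, x i ^ 2) ≤ x ⬝ᵥ M.mulVec x}

/-- `σ_e = diag(σ) 1_e`: the signed indicator vector of the edge `e`. -/
noncomputable def sigE {n : ℕ} (σ : Fin n → Bool) (e : Finset (Fin n)) : Fin n → ℝ :=
  fun i => if i ∈ e then sgn σ i else 0

/-- The matrix `(1_eᵀ σ_e) · diag(σ_e) - σ_e σ_eᵀ`. -/
noncomputable def Amat {n : ℕ} (σ : Fin n → Bool) (e : Finset (Fin n)) :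
    Matrix (Fin n) (Fin n) ℝ :=
  (∑ i ∈ e, sgn σ i) • Matrix.diagonal (sigE σ e) -
    Matrix.of fun i j => sigE σ e i * sigE σ e j

/-- The `ℓ₂ → ℓ₂` operator norm of a matrix. -/
noncomputable def opNorm {n : ℕ} (M : Matrix (Fin n) (Fin n) ℝ) : ℝ :=
  sSup {r : ℝ | ∃ x : Fin n → ℝ, (∑ i, x i ^ 2) = 1 ∧
    r = Real.sqrt (∑ i, (M.mulVec x i) ^ 2)}

/-- `∑_e Var((A_ℋ)_e) · (Π A_e Π)²`, where `Var((A_ℋ)_e) = P_e (1 - P_e)`. -/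
noncomputable def varMat (n k : ℕ) (p q : ℝ) (σ : Fin n → Bool) :
    Matrix (Fin n) (Fin n) ℝ :=
  ∑ e : KSet n k, (edgeP p q σ e.1 * (1 - edgeP p q σ e.1)) •
    ((PiM σ * Amat σ e.1 * PiM σ) * (PiM σ * Amat σ e.1 * PiM σ))


theorem opNorm_le_of_quad {n : ℕ} (M : Matrix (Fin n) (Fin n) ℝ) (hsym : Mᵀ = M)
    (lam : ℝ) (hlam : 0 ≤ lam)
    (hpos : ∀ x : Fin n → ℝ, 0 ≤ x ⬝ᵥ (M *ᵥ x))
    (hle : ∀ x : Fin n → ℝ, x ⬝ᵥ (M *ᵥ x) ≤ lam * ∑ i, x i ^ 2) : opNorm M ≤ lam := by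
  unfold opNorm
  apply Real.sSup_le _ hlam
  rintro r ⟨x, hx, rfl⟩
  set z := M *ᵥ x with hz
  set r := Real.sqrt (∑ i, (z i) ^ 2) with hr
  have hr0 : 0 ≤ r := Real.sqrt_nonneg _
  have hr2 : r ^ 2 = ∑ i, (z i) ^ 2 := Real.sq_sqrt (Finset.sum_nonneg fun i _ => sq_nonneg _)
  have hzz : z ⬝ᵥ z = r ^ 2 := by
    rw [hr2]; simp [dotProduct, sq]
  have hxz : x ⬝ᵥ (M *ᵥ z) = r ^ 2 := by
    rw [Matrix.dotProduct_mulVec, ← Matrix.mulVec_transpose, hsym, ← hz, hzz]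
  have h1 := hpos (z - r • x)
  rw [Matrix.mulVec_sub, Matrix.mulVec_smul, ← hz, sub_dotProduct, dotProduct_sub, dotProduct_sub,
    smul_dotProduct, smul_dotProduct, dotProduct_smul, dotProduct_smul, hxz, hzz] at h1
  have h2 := hle z
  have h3 := hle x
  rw [← hz, hx] at h3
  rw [← hr2] at h2
  simp only [smul_eq_mul] at h1
  by_contra hcon
  push Not at hcon
  have : 0 < r := lt_of_le_of_lt hlam hcon
  nlinarith [mul_le_mul_of_nonneg_left h3 (sq_nonneg r), mul_pos (pow_pos this 2) (sub_pos.2 hcon)]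

theorem PiM_mulVec {n : ℕ} (σ : Fin n → Bool) (x : Fin n → ℝ) (i : Fin n) :
    (PiM σ *ᵥ x) i = x i - (n : ℝ)⁻¹ * (∑ j, x j) - (n : ℝ)⁻¹ * (sgn σ i * ∑ j, sgn σ j * x j) := by
  unfold PiM outer
  rw [Matrix.sub_mulVec, Matrix.sub_mulVec, Matrix.smul_mulVec, Matrix.smul_mulVec]
  simp [Matrix.mulVec, dotProduct, Finset.mul_sum, mul_assoc]

theorem sgn_sq {n : ℕ} (σ : Fin n → Bool) (i : Fin n) : sgn σ i * sgn σ i = 1 := by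
  unfold sgn; split_ifs <;> norm_num

theorem PiM_sum {n : ℕ} (hn : n ≠ 0) (σ : Fin n → Bool) (h0 : ∑ i, sgn σ i = 0) (x : Fin n → ℝ) :
    ∑ i, (PiM σ *ᵥ x) i = 0 := by
  have hn' : (n : ℝ) ≠ 0 := by exact_mod_cast hn
  simp only [PiM_mulVec, Finset.sum_sub_distrib, ← Finset.mul_sum, ← Finset.sum_mul, h0]
  simp
  field_simp
  simp

theorem PiM_sgn_sum {n : ℕ} (hn : n ≠ 0) (σ : Fin n → Bool) (h0 : ∑ i, sgn σ i = 0)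
    (x : Fin n → ℝ) : ∑ i, sgn σ i * (PiM σ *ᵥ x) i = 0 := by
  have hn' : (n : ℝ) ≠ 0 := by exact_mod_cast hn
  set b := ∑ j, sgn σ j * x j with hb
  have : ∀ i, sgn σ i * (PiM σ *ᵥ x) i =
      sgn σ i * x i - sgn σ i * ((n : ℝ)⁻¹ * (∑ j, x j)) - (n : ℝ)⁻¹ * b := by
    intro i
    rw [PiM_mulVec]
    linear_combination (-(n : ℝ)⁻¹ * b) * sgn_sq σ i
  simp only [this, Finset.sum_sub_distrib, ← Finset.sum_mul, h0, ← hb]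
  simp
  field_simp
  simp

theorem PiM_norm_le {n : ℕ} (hn : n ≠ 0) (σ : Fin n → Bool) (h0 : ∑ i, sgn σ i = 0)
    (x : Fin n → ℝ) : ∑ i, ((PiM σ *ᵥ x) i) ^ 2 ≤ ∑ i, x i ^ 2 := by
  have hn' : (n : ℝ) ≠ 0 := by exact_mod_cast hn
  set y := PiM σ *ᵥ x with hy
  have h1 := PiM_sum hn σ h0 x
  have h2 := PiM_sgn_sum hn σ h0 x
  rw [← hy] at h1 h2
  set a := ∑ j, x j
  set b := ∑ j, sgn σ j * x j
  have h3 : ∀ i, y i ^ 2 = x i * y i - (n : ℝ)⁻¹ * a * y i - (n : ℝ)⁻¹ * b * (sgn σ i * y i) := by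
    intro i
    have : y i = x i - (n : ℝ)⁻¹ * a - (n : ℝ)⁻¹ * (sgn σ i * b) := PiM_mulVec σ x i
    linear_combination y i * this
  have h4 : ∑ i, y i ^ 2 = ∑ i, x i * y i := by
    simp only [h3, Finset.sum_sub_distrib, ← Finset.mul_sum, h1, h2]; simp
  have h5 : 0 ≤ ∑ i, (x i - y i) ^ 2 := Finset.sum_nonneg fun i _ => sq_nonneg _
  have h6 : ∑ i, (x i - y i) ^ 2 = ∑ i, x i ^ 2 - 2 * ∑ i, x i * y i + ∑ i, y i ^ 2 := by
    rw [Finset.mul_sum, ← Finset.sum_sub_distrib, ← Finset.sum_add_distrib]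
    exact Finset.sum_congr rfl fun i _ => by ring
  linarith

theorem PiM_symm {n : ℕ} (σ : Fin n → Bool) : (PiM σ)ᵀ = PiM σ := by
  ext i j
  simp [PiM, outer, Matrix.one_apply, eq_comm, mul_comm]

theorem Amat_symm {n : ℕ} (σ : Fin n → Bool) (e : Finset (Fin n)) : (Amat σ e)ᵀ = Amat σ e := by
  ext i j
  simp only [Amat, Matrix.transpose_apply, Matrix.sub_apply, Matrix.smul_apply, Matrix.of_apply,
    Matrix.diagonal_apply]
  by_cases h : i = j
  · subst h; rfl
  · simp [h, Ne.symm h, mul_comm]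

theorem varMat_symm {n k : ℕ} (p q : ℝ) (σ : Fin n → Bool) :
    (varMat n k p q σ)ᵀ = varMat n k p q σ := by
  unfold varMat
  rw [Matrix.transpose_sum]
  refine Finset.sum_congr rfl fun e _ => ?_
  simp only [Matrix.transpose_smul, Matrix.transpose_mul, PiM_symm, Amat_symm, Matrix.mul_assoc]

theorem varMat_quad {n k : ℕ} (p q : ℝ) (σ : Fin n → Bool) (x : Fin n → ℝ) :
    x ⬝ᵥ (varMat n k p q σ *ᵥ x) = ∑ e : KSet n k, (edgeP p q σ e.1 * (1 - edgeP p q σ e.1)) *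
      ∑ i, ((PiM σ *ᵥ (Amat σ e.1 *ᵥ (PiM σ *ᵥ x))) i) ^ 2 := by
  unfold varMat
  rw [Matrix.sum_mulVec, dotProduct_sum]
  refine Finset.sum_congr rfl fun e _ => ?_
  rw [Matrix.smul_mulVec, dotProduct_smul, smul_eq_mul]
  congr 1
  have hB : (PiM σ * Amat σ e.1 * PiM σ)ᵀ = PiM σ * Amat σ e.1 * PiM σ := by
    simp only [Matrix.transpose_mul, PiM_symm, Amat_symm, Matrix.mul_assoc]
  rw [← Matrix.mulVec_mulVec, Matrix.dotProduct_mulVec, ← Matrix.mulVec_transpose, hB]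
  simp only [← Matrix.mulVec_mulVec, dotProduct, sq]

/-- indicator -/
noncomputable def eps {n : ℕ} (e : Finset (Fin n)) (i : Fin n) : ℝ := if i ∈ e then 1 else 0

theorem sigE_eq {n : ℕ} (σ : Fin n → Bool) (e : Finset (Fin n)) (i : Fin n) :
    sigE σ e i = eps e i * sgn σ i := by
  unfold sigE eps; split_ifs <;> simp

theorem eps_sq {n : ℕ} (e : Finset (Fin n)) (i : Fin n) : eps e i * eps e i = eps e i := by
  unfold eps; split_ifs <;> simp

theorem sum_eps {n : ℕ} (e : Finset (Fin n)) : ∑ i, eps e i = e.card := by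
  simp [eps]

/-- label sum -/
noncomputable def ssum {n : ℕ} (σ : Fin n → Bool) (e : Finset (Fin n)) : ℝ := ∑ i ∈ e, sgn σ i

theorem ssum_eq {n : ℕ} (σ : Fin n → Bool) (e : Finset (Fin n)) :
    ssum σ e = ∑ i, eps e i * sgn σ i := by
  simp [ssum, eps, Finset.sum_ite_mem]

/-- off-diagonal type part of the square of `Amat` -/
noncomputable def gE {n : ℕ} (σ : Fin n → Bool) (e : Finset (Fin n)) (i j : Fin n) : ℝ :=
  eps e i * eps e j * (-(ssum σ e) * (sgn σ i + sgn σ j) + e.card * (sgn σ i * sgn σ j))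

theorem Amat_norm {n : ℕ} (σ : Fin n → Bool) (e : Finset (Fin n)) (y : Fin n → ℝ) :
    ∑ i, ((Amat σ e *ᵥ y) i) ^ 2 =
      ∑ i, eps e i * ssum σ e ^ 2 * y i ^ 2 + ∑ j, y j * ∑ i, gE σ e i j * y i := by
  set s := ssum σ e with hs
  set t := ∑ j, eps e j * sgn σ j * y j with ht
  set u := ∑ j, eps e j * y j with hu
  have h1 : ∀ i, (Amat σ e *ᵥ y) i = eps e i * sgn σ i * (s * y i - t) := by
    intro i
    unfold Amat
    rw [Matrix.sub_mulVec, Matrix.smul_mulVec]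
    have : (Matrix.of (fun i j => sigE σ e i * sigE σ e j) *ᵥ y) i = sigE σ e i * t := by
      simp [Matrix.mulVec, dotProduct, ht, Finset.mul_sum, sigE_eq, mul_assoc]
    rw [Pi.sub_apply, this]
    simp only [Pi.smul_apply, Matrix.mulVec_diagonal, smul_eq_mul, sigE_eq]
    rw [show (∑ i ∈ e, sgn σ i) = s from rfl]; ring
  have h2 : ∀ i, ((Amat σ e *ᵥ y) i) ^ 2 = eps e i * s ^ 2 * y i ^ 2 - 2 * s * t * (eps e i * y i)
      + t ^ 2 * eps e i := by
    intro i
    rw [h1]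
    linear_combination (sgn σ i * sgn σ i * (s * y i - t)^2) * eps_sq e i +
      eps e i * (s * y i - t)^2 * sgn_sq σ i
  have h3 : ∀ j, y j * ∑ i, gE σ e i j * y i =
      -s * t * (eps e j * y j) - s * u * (eps e j * sgn σ j * y j) +
       e.card * t * (eps e j * sgn σ j * y j) := by
    intro j
    have : ∀ i, gE σ e i j * y i = -s * eps e j * (eps e i * sgn σ i * y i)
       - s * eps e j * sgn σ j * (eps e i * y i)
       + e.card * eps e j * sgn σ j * (eps e i * sgn σ i * y i) := by
      intro i; unfold gE; rw [← hs]; ring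
    simp only [this, Finset.sum_add_distrib, Finset.sum_sub_distrib, ← Finset.mul_sum, ← ht, ← hu]
    ring
  simp only [h2, h3, Finset.sum_add_distrib, Finset.sum_sub_distrib, ← Finset.mul_sum, ← ht, ← hu,
    sum_eps]
  ring

/-- the total off-diagonal form -/
noncomputable def gTot {n : ℕ} (k : ℕ) (p q : ℝ) (σ : Fin n → Bool) (i j : Fin n) : ℝ :=
  ∑ e : KSet n k, edgeP p q σ e.1 * gE σ e.1 i j

theorem edgeP_map {n : ℕ} (p q : ℝ) (σ : Fin n → Bool) (f : Equiv.Perm (Fin n))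
    (hf : ∀ i, σ (f i) = σ i) (e : Finset (Fin n)) :
    edgeP p q σ (e.map f.toEmbedding) = edgeP p q σ e := by
  unfold edgeP
  have : inCluster σ (e.map f.toEmbedding) ↔ inCluster σ e := by
    simp only [inCluster, Finset.forall_mem_map, Equiv.coe_toEmbedding, hf]
  simp only [this]

theorem gE_map {n : ℕ} (σ : Fin n → Bool) (f : Equiv.Perm (Fin n))
    (hf : ∀ i, σ (f i) = σ i) (e : Finset (Fin n)) (i j : Fin n) :
    gE σ (e.map f.toEmbedding) (f i) (f j) = gE σ e i j := by
  have hs : ∀ i, sgn σ (f i) = sgn σ i := fun i => by simp [sgn, hf]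
  have he : ∀ i, eps (e.map f.toEmbedding) (f i) = eps e i := fun i => by simp [eps]
  have h1 : ssum σ (e.map f.toEmbedding) = ssum σ e := by simp [ssum, hs]
  unfold gE
  rw [hs, hs, he, he, h1, Finset.card_map]

/-- the action of a permutation on `k`-sets -/
def kMap {n : ℕ} (k : ℕ) (f : Equiv.Perm (Fin n)) : KSet n k ≃ KSet n k where
  toFun e := ⟨e.1.map f.toEmbedding, by rw [Finset.card_map]; exact e.2⟩
  invFun e := ⟨e.1.map f.symm.toEmbedding, by rw [Finset.card_map]; exact e.2⟩
  left_inv e := by apply Subtype.ext; ext a; simp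
  right_inv e := by apply Subtype.ext; ext a; simp

theorem gTot_perm {n : ℕ} (k : ℕ) (p q : ℝ) (σ : Fin n → Bool) (f : Equiv.Perm (Fin n))
    (hf : ∀ i, σ (f i) = σ i) (i j : Fin n) :
    gTot k p q σ (f i) (f j) = gTot k p q σ i j := by
  unfold gTot
  rw [← (kMap k f).sum_comp]
  refine Finset.sum_congr rfl fun e _ => ?_
  change edgeP p q σ (e.1.map f.toEmbedding) * gE σ (e.1.map f.toEmbedding) (f i) (f j) = _
  rw [edgeP_map p q σ f hf, gE_map σ f hf]

theorem gTot_swap {n : ℕ} (k : ℕ) (p q : ℝ) (σ : Fin n → Bool) (i i' j : Fin n)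
    (h : σ i = σ i') (hi : i ≠ j) (hi' : i' ≠ j) : gTot k p q σ i j = gTot k p q σ i' j := by
  have := gTot_perm k p q σ (Equiv.swap i i') (fun a => by
    rcases eq_or_ne a i with rfl | h1
    · simp [h]
    rcases eq_or_ne a i' with rfl | h2
    · simp [h]
    rw [Equiv.swap_apply_of_ne_of_ne h1 h2]) i j
  rw [Equiv.swap_apply_left, Equiv.swap_apply_of_ne_of_ne hi.symm hi'.symm] at this
  exact this.symm

theorem gTot_row {n : ℕ} (k : ℕ) (p q : ℝ) (σ : Fin n → Bool) (y : Fin n → ℝ)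
    (h1 : ∑ i, y i = 0) (h2 : ∑ i, sgn σ i * y i = 0) (j j' : Fin n) (hj : j' ≠ j)
    (hσ : σ j' = σ j) :
    ∑ i, gTot k p q σ i j * y i = (gTot k p q σ j j - gTot k p q σ j' j) * y j := by
  have hc : ∀ b : Bool, ∃ v : ℝ, ∀ i, i ≠ j → σ i = b → gTot k p q σ i j = v := by
    intro b
    by_cases h : ∃ l, l ≠ j ∧ σ l = b
    · obtain ⟨l, hl, hb⟩ := h
      exact ⟨gTot k p q σ l j, fun i hi hib => gTot_swap k p q σ i l j (hib.trans hb.symm) hi hl⟩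
    · push Not at h
      exact ⟨0, fun i hi hib => absurd hib (h i hi)⟩
  choose c hc using hc
  have hcj : gTot k p q σ j' j = c (σ j) := hc _ j' hj hσ
  have h3 : ∀ i, gTot k p q σ i j * y i =
      ((c true + c false) / 2) * y i + ((c true - c false) / 2) * (sgn σ i * y i) +
      if i = j then (gTot k p q σ j j - c (σ j)) * y j else 0 := by
    intro i
    have h4 : c (σ i) = (c true + c false) / 2 + ((c true - c false) / 2) * sgn σ i := by
      cases h : σ i <;> simp [sgn, h] <;> ring
    split_ifs with h
    · subst h
      linear_combination (y i) * h4
    · rw [hc _ i h rfl]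
      linear_combination (y i) * h4
  simp only [h3, Finset.sum_add_distrib, ← Finset.mul_sum, h1, h2, hcj]
  simp

theorem count_sets {n : ℕ} (k : ℕ) (T P : Finset (Fin n)) (hTP : T ⊆ P) :
    (Finset.univ.filter (fun e : KSet n k => T ⊆ e.1 ∧ e.1 ⊆ P)).card =
      if T.card ≤ k then (P.card - T.card).choose (k - T.card) else 0 := by
  split_ifs with h
  · rw [← Finset.card_sdiff_of_subset hTP, ← Finset.card_powersetCard]
    refine Finset.card_bij (fun e _ => e.1 \ T) ?_ ?_ ?_
    · intro e he
      simp only [Finset.mem_filter, Finset.mem_univ, true_and] at he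
      rw [Finset.mem_powersetCard]
      exact ⟨Finset.sdiff_subset_sdiff he.2 le_rfl, by rw [Finset.card_sdiff_of_subset he.1, e.2]⟩
    · intro e he e' he' hh
      simp only [Finset.mem_filter, Finset.mem_univ, true_and] at he he'
      apply Subtype.ext
      rw [← Finset.sdiff_union_of_subset he.1, ← Finset.sdiff_union_of_subset he'.1]
      exact congrArg (· ∪ T) hh
    · intro b hb
      rw [Finset.mem_powersetCard] at hb
      have hd : Disjoint b T := Finset.disjoint_of_subset_left hb.1 Finset.sdiff_disjoint
      refine ⟨⟨b ∪ T, ?_⟩, ?_, ?_⟩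
      · rw [Finset.card_union_of_disjoint hd, hb.2]; omega
      · simp only [Finset.mem_filter, Finset.mem_univ, true_and]
        exact ⟨Finset.subset_union_right,
          Finset.union_subset (hb.1.trans Finset.sdiff_subset) hTP⟩
      · simp only
        rw [Finset.union_sdiff_right, Finset.sdiff_eq_self_of_disjoint hd]
  · rw [Finset.card_eq_zero, Finset.filter_eq_empty_iff]
    rintro e - ⟨h1, -⟩
    have := Finset.card_le_card h1
    rw [e.2] at this
    exact h this

/-- number of `k`-sets containing a given `t`-set -/
noncomputable def NN (n k t : ℕ) : ℝ := if t ≤ k then ((n - t).choose (k - t) : ℝ) else 0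

theorem NN_nonneg (n k t : ℕ) : 0 ≤ NN n k t := by unfold NN; split_ifs <;> positivity

theorem count_super {n : ℕ} (k : ℕ) (T : Finset (Fin n)) :
    ∑ e : KSet n k, (if T ⊆ e.1 then (1 : ℝ) else 0) = NN n k T.card := by
  have := count_sets k T Finset.univ (Finset.subset_univ _)
  rw [Finset.sum_boole]
  simp only [Finset.subset_univ, and_true, Finset.card_univ, Fintype.card_fin] at this
  rw [this]
  unfold NN
  split_ifs <;> simp

theorem sum_eps1 {n : ℕ} (k : ℕ) (i : Fin n) : ∑ e : KSet n k, eps e.1 i = NN n k 1 := by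
  have := count_super k ({i} : Finset (Fin n))
  rw [Finset.card_singleton] at this
  rw [← this]
  simp [eps]

theorem sum_eps2 {n : ℕ} (k : ℕ) (i j : Fin n) : ∑ e : KSet n k, eps e.1 i * eps e.1 j =
    NN n k 2 + if i = j then NN n k 1 - NN n k 2 else 0 := by
  split_ifs with h
  · subst h; simp only [eps_sq, sum_eps1]; ring
  · have := count_super k ({i, j} : Finset (Fin n))
    rw [Finset.card_pair h] at this
    rw [← this, add_zero]
    refine Finset.sum_congr rfl fun e _ => ?_
    simp [eps, Finset.insert_subset_iff, ite_and]
    split_ifs <;> simp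

theorem sum_eps3 {n : ℕ} (k : ℕ) (i j l : Fin n) :
    ∑ e : KSet n k, eps e.1 i * eps e.1 j * eps e.1 l =
    NN n k 3 + (if j = l then NN n k 2 - NN n k 3 else 0) + (if i = j then NN n k 2 - NN n k 3 else 0)
      + (if i = l then NN n k 2 - NN n k 3 else 0)
      + (if i = j then if i = l then NN n k 1 - 3 * NN n k 2 + 2 * NN n k 3 else 0 else 0) := by
  by_cases h1 : i = j
  · subst h1
    simp only [eps_sq, sum_eps2]
    split_ifs <;> ring
  by_cases h2 : i = l
  · subst h2
    have : ∀ e : KSet n k, eps e.1 i * eps e.1 j * eps e.1 i = eps e.1 i * eps e.1 j := fun e => by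
      linear_combination eps e.1 j * eps_sq e.1 i
    simp only [this, sum_eps2, h1, Ne.symm h1]
    simp
  by_cases h3 : j = l
  · subst h3
    simp only [mul_assoc, eps_sq, sum_eps2, h1]
    simp
  have := count_super k ({i, j, l} : Finset (Fin n))
  rw [Finset.card_eq_three.2 ⟨i, j, l, h1, h2, h3, rfl⟩] at this
  simp only [h1, h2, h3, if_false, add_zero]
  rw [← this]
  refine Finset.sum_congr rfl fun e _ => ?_
  simp [eps, Finset.insert_subset_iff, ite_and]
  split_ifs <;> simp

theorem sum_all_le {n : ℕ} (hn : 2 ≤ n) (k : ℕ) (σ : Fin n → Bool) (h0 : ∑ i, sgn σ i = 0)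
    (hN : ((n : ℝ) - 1) * NN n k 2 = ((k : ℝ) - 1) * NN n k 1) (i : Fin n) :
    ∑ e : KSet n k, eps e.1 i * (ssum σ e.1 ^ 2 - 2 * ssum σ e.1 * sgn σ i + k) ≤
      2 * ((k : ℝ) - 1) * NN n k 1 := by
  have hA : ∑ e : KSet n k, eps e.1 i * ssum σ e.1 ^ 2 =
      n * (NN n k 2 - NN n k 3) + (NN n k 1 - 3 * NN n k 2 + 2 * NN n k 3) := by
    have h1 : ∀ e : KSet n k, eps e.1 i * ssum σ e.1 ^ 2 =
        ∑ j, ∑ l, sgn σ j * sgn σ l * (eps e.1 i * eps e.1 j * eps e.1 l) := by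
      intro e
      rw [ssum_eq, sq, Finset.sum_mul_sum, Finset.mul_sum]
      refine Finset.sum_congr rfl fun j _ => ?_
      rw [Finset.mul_sum]
      exact Finset.sum_congr rfl fun l _ => by ring
    simp only [h1]
    rw [Finset.sum_comm]
    have h2 : ∀ j, ∑ e : KSet n k, ∑ l, sgn σ j * sgn σ l * (eps e.1 i * eps e.1 j * eps e.1 l) =
        (NN n k 2 - NN n k 3) + (if i = j then NN n k 1 - 3 * NN n k 2 + 2 * NN n k 3 else 0) +
          sgn σ j * (sgn σ i * (NN n k 2 - NN n k 3)) := by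
      intro j
      rw [Finset.sum_comm]
      simp only [← Finset.mul_sum, sum_eps3]
      simp only [mul_add, mul_ite, mul_zero, Finset.sum_add_distrib, ← Finset.mul_sum,
        ← Finset.sum_mul, h0, Finset.sum_ite_eq, Finset.mem_univ, if_true, sgn_sq]
      by_cases h : i = j
      · subst h
        simp [mul_assoc, ← Finset.mul_sum, ← Finset.sum_mul, h0]
        linear_combination (NN n k 1 - 3 * NN n k 2 + 2 * NN n k 3) * sgn_sq σ i
      · simp [h]
        ring
    simp only [h2, Finset.sum_add_distrib, ← Finset.sum_mul, h0]
    simp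
    ring
  have hB : ∑ e : KSet n k, eps e.1 i * ssum σ e.1 = sgn σ i * (NN n k 1 - NN n k 2) := by
    simp only [ssum_eq, Finset.mul_sum]
    rw [Finset.sum_comm]
    have : ∀ j, ∑ e : KSet n k, eps e.1 i * (eps e.1 j * sgn σ j) =
        sgn σ j * NN n k 2 + if i = j then sgn σ j * (NN n k 1 - NN n k 2) else 0 := by
      intro j
      simp only [← mul_assoc, ← Finset.sum_mul, sum_eps2]
      split_ifs <;> ring
    simp only [this, Finset.sum_add_distrib, ← Finset.sum_mul, h0]
    simp
  have : ∀ e : KSet n k, eps e.1 i * (ssum σ e.1 ^ 2 - 2 * ssum σ e.1 * sgn σ i + k) =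
     eps e.1 i * ssum σ e.1 ^ 2 - 2 * sgn σ i * (eps e.1 i * ssum σ e.1) + k * eps e.1 i := by
    intro e; ring
  simp only [this, Finset.sum_add_distrib, Finset.sum_sub_distrib, ← Finset.mul_sum, hA, hB,
    sum_eps1]
  have h3 := NN_nonneg n k 3
  have hn' : (2 : ℝ) ≤ n := by exact_mod_cast hn
  have h4 : 2 * sgn σ i * (sgn σ i * (NN n k 1 - NN n k 2)) = 2 * (NN n k 1 - NN n k 2) := by
    linear_combination 2 * (NN n k 1 - NN n k 2) * sgn_sq σ i
  rw [h4]
  nlinarith [mul_nonneg (sub_nonneg.2 hn') h3]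

theorem sum_in {n : ℕ} (k : ℕ) (hk : 1 ≤ k) (m : ℕ) (σ : Fin n → Bool) (i : Fin n)
    (hm : (Finset.univ.filter (fun j => σ j = σ i)).card = m) :
    ∑ e : KSet n k, (if inCluster σ e.1 then
      eps e.1 i * (ssum σ e.1 ^ 2 - 2 * ssum σ e.1 * sgn σ i + k) else 0) =
      k * ((k : ℝ) - 1) * ((m - 1).choose (k - 1) : ℝ) := by
  have hc := count_sets k {i} (Finset.univ.filter (fun j => σ j = σ i)) (by simp)
  rw [hm, Finset.card_singleton, if_pos hk] at hc
  rw [← hc, ← Finset.sum_boole, Finset.mul_sum]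
  refine Finset.sum_congr rfl fun e _ => ?_
  by_cases hi : i ∈ e.1
  · have h1 : inCluster σ e.1 ↔ ({i} ⊆ e.1 ∧ e.1 ⊆ Finset.univ.filter (fun j => σ j = σ i)) := by
      constructor
      · intro h
        refine ⟨by simpa using hi, fun j hj => ?_⟩
        simpa using h j hj i hi
      · rintro ⟨-, h⟩ a ha b hb
        have h1 := h ha
        have h2 := h hb
        simp at h1 h2
        rw [h1, h2]
    by_cases h : inCluster σ e.1
    · rw [if_pos h, if_pos (h1.1 h)]
      have hs : ssum σ e.1 = k * sgn σ i := by
        unfold ssum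
        rw [Finset.sum_congr rfl (g := fun _ => sgn σ i)]
        · simp [e.2]
        · intro j hj
          simp [sgn, h j hj i hi]
      rw [hs, show eps e.1 i = 1 by simp [eps, hi]]
      linear_combination ((k : ℝ) ^ 2 - 2 * k) * sgn_sq σ i
    · rw [if_neg h, if_neg (fun hh => h (h1.2 hh))]; simp
  · rw [if_neg (c := _ ∧ _) (fun hh => hi (by simpa using hh.1))]
    simp [eps, hi]

theorem gTot_bound {n : ℕ} (k : ℕ) (p q : ℝ) (hp : 0 ≤ p) (hq : 0 ≤ q) (σ : Fin n → Bool)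
    (i j : Fin n) (hij : i ≠ j) : -gTot k p q σ i j ≤ (p + q) * (3 * k) * NN n k 2 := by
  have h := sum_eps2 k i j
  rw [if_neg hij, add_zero] at h
  rw [← h, gTot, ← Finset.sum_neg_distrib, Finset.mul_sum]
  refine Finset.sum_le_sum fun e _ => ?_
  have hw0 : 0 ≤ edgeP p q σ e.1 := by unfold edgeP; split_ifs <;> assumption
  have hw : edgeP p q σ e.1 ≤ p + q := by unfold edgeP; split_ifs <;> linarith
  have hs1 : ∀ i, |sgn σ i| = 1 := fun i => by unfold sgn; split_ifs <;> simp
  have hs : |ssum σ e.1| ≤ k := by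
    unfold ssum
    refine (Finset.abs_sum_le_sum_abs _ _).trans ?_
    simp [hs1, e.2]
  have hee : 0 ≤ eps e.1 i * eps e.1 j := by unfold eps; split_ifs <;> simp
  unfold gE
  rw [e.2]
  set X := (-(ssum σ e.1) * (sgn σ i + sgn σ j) + (k : ℝ) * (sgn σ i * sgn σ j)) with hX
  have hXb : -X ≤ 3 * k := by
    have h1 := abs_le.1 hs
    rw [hX]
    have hk0 : (0 : ℝ) ≤ k := Nat.cast_nonneg k
    unfold sgn
    split_ifs <;> linarith [h1.1, h1.2]
  have hk0 : (0 : ℝ) ≤ 3 * k := by positivity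
  calc -(edgeP p q σ e.1 * (eps e.1 i * eps e.1 j * X))
      = (edgeP p q σ e.1 * (-X)) * (eps e.1 i * eps e.1 j) := by ring
    _ ≤ ((p + q) * (3 * k)) * (eps e.1 i * eps e.1 j) := by
        apply mul_le_mul_of_nonneg_right _ hee
        calc edgeP p q σ e.1 * (-X) ≤ edgeP p q σ e.1 * (3 * k) :=
              mul_le_mul_of_nonneg_left hXb hw0
          _ ≤ _ := mul_le_mul_of_nonneg_right hw hk0

theorem quad_bound {n : ℕ} (hn : 2 ≤ n) (k : ℕ) (hk : 1 ≤ k) (m : ℕ) (hm2 : 2 ≤ m) (p q : ℝ)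
    (hp : 0 ≤ p) (hq : 0 ≤ q)
    (σ : Fin n → Bool) (h0 : ∑ i, sgn σ i = 0)
    (hm : ∀ i, (Finset.univ.filter (fun j => σ j = σ i)).card = m)
    (hN : ((n : ℝ) - 1) * NN n k 2 = ((k : ℝ) - 1) * NN n k 1)
    (y : Fin n → ℝ) (h1 : ∑ i, y i = 0) (h2 : ∑ i, sgn σ i * y i = 0) :
    ∑ e : KSet n k, edgeP p q σ e.1 * ∑ i, ((Amat σ e.1 *ᵥ y) i) ^ 2 ≤
      (q * (2 * ((k : ℝ) - 1) * NN n k 1) +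
        (p - q) * (k * ((k : ℝ) - 1) * ((m - 1).choose (k - 1) : ℝ)) +
        (p + q) * (3 * k) * NN n k 2) * ∑ i, y i ^ 2 := by
  have hex : ∀ j, ∃ j', j' ≠ j ∧ σ j' = σ j := by
    intro j
    have : 1 < (Finset.univ.filter (fun l => σ l = σ j)).card := by rw [hm]; omega
    obtain ⟨a, ha, b⟩ := Finset.exists_mem_ne this j
    exact ⟨a, b, by simpa using ha⟩
  have e1 : ∑ e : KSet n k, edgeP p q σ e.1 * ∑ i, ((Amat σ e.1 *ᵥ y) i) ^ 2 =
      ∑ j, ((∑ e : KSet n k, edgeP p q σ e.1 * (eps e.1 j * ssum σ e.1 ^ 2)) * y j ^ 2 +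
        y j * ∑ i, gTot k p q σ i j * y i) := by
    simp only [Amat_norm, mul_add, Finset.sum_add_distrib]
    congr 1
    · simp only [Finset.mul_sum, Finset.sum_mul]
      rw [Finset.sum_comm]
      refine Finset.sum_congr rfl fun i _ => Finset.sum_congr rfl fun e _ => by ring
    · simp only [gTot, Finset.mul_sum, Finset.sum_mul]
      rw [Finset.sum_comm]
      refine Finset.sum_congr rfl fun i _ => ?_
      rw [Finset.sum_comm]
      refine Finset.sum_congr rfl fun j _ => Finset.sum_congr rfl fun e _ => by ring
  rw [e1, Finset.mul_sum]
  refine Finset.sum_le_sum fun j _ => ?_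
  obtain ⟨j', hj, hσ⟩ := hex j
  rw [gTot_row k p q σ y h1 h2 j j' hj hσ]
  have hb := gTot_bound k p q hp hq σ j' j hj
  have hd : (∑ e : KSet n k, edgeP p q σ e.1 * (eps e.1 j * ssum σ e.1 ^ 2)) + gTot k p q σ j j =
      q * (∑ e : KSet n k, eps e.1 j * (ssum σ e.1 ^ 2 - 2 * ssum σ e.1 * sgn σ j + k)) +
      (p - q) * (k * ((k : ℝ) - 1) * ((m - 1).choose (k - 1) : ℝ)) := by
    rw [← sum_in k hk m σ j (hm j), gTot, ← Finset.sum_add_distrib, Finset.mul_sum, Finset.mul_sum,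
      ← Finset.sum_add_distrib]
    refine Finset.sum_congr rfl fun e _ => ?_
    have hg : gE σ e.1 j j = eps e.1 j * (- 2 * ssum σ e.1 * sgn σ j + k) := by
      unfold gE
      rw [eps_sq, sgn_sq, e.2]; ring
    rw [hg]
    unfold edgeP
    split_ifs <;> ring
  have hall := sum_all_le hn k σ h0 hN j
  have hle := mul_le_mul_of_nonneg_left hall hq
  have := mul_le_mul_of_nonneg_right (show (∑ e : KSet n k, edgeP p q σ e.1 * (eps e.1 j * ssum σ e.1 ^ 2))
    + gTot k p q σ j j - gTot k p q σ j' j ≤ q * (2 * ((k : ℝ) - 1) * NN n k 1) +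
        (p - q) * (k * ((k : ℝ) - 1) * ((m - 1).choose (k - 1) : ℝ)) +
        (p + q) * (3 * k) * NN n k 2 by
      rw [hd]; linarith) (sq_nonneg (y j))
  linarith

theorem main_bound {n : ℕ} (hn : 2 ≤ n) (k : ℕ) (hk : 1 ≤ k) (m : ℕ) (hm2 : 2 ≤ m) (p q : ℝ)
    (hp : 0 ≤ p) (hq : 0 ≤ q) (hp1 : p ≤ 1) (hq1 : q ≤ 1)
    (σ : Fin n → Bool) (h0 : ∑ i, sgn σ i = 0)
    (hm : ∀ i, (Finset.univ.filter (fun j => σ j = σ i)).card = m)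
    (hN : ((n : ℝ) - 1) * NN n k 2 = ((k : ℝ) - 1) * NN n k 1) (lam : ℝ) (hlam : 0 ≤ lam)
    (hl : q * (2 * ((k : ℝ) - 1) * NN n k 1) +
        (p - q) * (k * ((k : ℝ) - 1) * ((m - 1).choose (k - 1) : ℝ)) +
        (p + q) * (3 * k) * NN n k 2 ≤ lam) :
    opNorm (varMat n k p q σ) ≤ lam := by
  have hn0 : n ≠ 0 := by omega
  have hw0 : ∀ e : KSet n k, 0 ≤ edgeP p q σ e.1 := fun e => by
    unfold edgeP; split_ifs <;> assumption
  have hw1 : ∀ e : KSet n k, edgeP p q σ e.1 ≤ 1 := fun e => by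
    unfold edgeP; split_ifs <;> assumption
  have hv0 : ∀ e : KSet n k, 0 ≤ edgeP p q σ e.1 * (1 - edgeP p q σ e.1) := fun e =>
    mul_nonneg (hw0 e) (sub_nonneg.2 (hw1 e))
  apply opNorm_le_of_quad _ (varMat_symm p q σ) lam hlam
  · intro x
    rw [varMat_quad]
    exact Finset.sum_nonneg fun e _ => mul_nonneg (hv0 e) (Finset.sum_nonneg fun i _ => sq_nonneg _)
  · intro x
    rw [varMat_quad]
    have hq := quad_bound hn k hk m hm2 p q hp hq σ h0 hm hN (PiM σ *ᵥ x) (PiM_sum hn0 σ h0 x)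
      (PiM_sgn_sum hn0 σ h0 x)
    refine le_trans (Finset.sum_le_sum fun e _ => ?_) (hq.trans ?_)
    · refine mul_le_mul ?_ (PiM_norm_le hn0 σ h0 _) (Finset.sum_nonneg fun i _ => sq_nonneg _) (hw0 e)
      nlinarith [hw0 e]
    · refine (mul_le_mul_of_nonneg_right hl (Finset.sum_nonneg fun i _ => sq_nonneg _)).trans ?_
      exact mul_le_mul_of_nonneg_left (PiM_norm_le hn0 σ h0 x) hlam

theorem ratio_bound (r : ℕ) : ∃ K : ℝ, 0 ≤ K ∧ ∀ m : ℕ, r + 1 ≤ m →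
    |((m - 1).choose r : ℝ) / ((2 * m - 1).choose r : ℝ) - 1 / 2 ^ r| ≤ K / (2 * m : ℝ) := by
  induction r with
  | zero => exact ⟨0, le_rfl, fun m hm => by simp⟩
  | succ r ih =>
    obtain ⟨K, hK, h⟩ := ih
    refine ⟨K + 2 * (r + 1), by positivity, fun m hm => ?_⟩
    have h1 := h m (by omega)
    have hm' : ((r : ℝ) + 2) ≤ m := by exact_mod_cast hm
    have hr0 : (0 : ℝ) ≤ r := Nat.cast_nonneg r
    set a : ℝ := ((m - 1).choose r : ℝ) with ha
    set b : ℝ := ((2 * m - 1).choose r : ℝ) with hb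
    have hb0 : 0 < b := by
      rw [hb]; exact_mod_cast Nat.choose_pos (by omega)
    have ha0 : 0 ≤ a := Nat.cast_nonneg _
    have hab : a ≤ b := by
      rw [ha, hb]; exact_mod_cast Nat.choose_le_choose r (by omega)
    have e1 : ((m - 1).choose (r + 1) : ℝ) = a * (m - 1 - r) / (r + 1) := by
      have := Nat.choose_succ_right_eq (m - 1) r
      have h2 : ((m - 1 - r : ℕ) : ℝ) = m - 1 - r := by
        rw [Nat.cast_sub (by omega), Nat.cast_sub (by omega)]; simp
      rw [eq_div_iff (by positivity), ha, ← h2]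
      exact_mod_cast this
    have e2 : ((2 * m - 1).choose (r + 1) : ℝ) = b * (2 * m - 1 - r) / (r + 1) := by
      have := Nat.choose_succ_right_eq (2 * m - 1) r
      have h2 : ((2 * m - 1 - r : ℕ) : ℝ) = 2 * m - 1 - r := by
        rw [Nat.cast_sub (by omega), Nat.cast_sub (by omega)]; simp
      rw [eq_div_iff (by positivity), hb, ← h2]
      exact_mod_cast this
    have hD : (0 : ℝ) < 2 * m - 1 - r := by linarith
    have e3 : ((m - 1).choose (r + 1) : ℝ) / ((2 * m - 1).choose (r + 1) : ℝ) - 1 / 2 ^ (r + 1) =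
        -(a / b * ((r + 1) / (2 * (2 * m - 1 - r)))) + 1 / 2 * (a / b - 1 / 2 ^ r) := by
      rw [e1, e2, pow_succ]
      have h5 : (m : ℝ) - 1 - r = ((2 * m - 1 - r) - 1 - r) / 2 := by ring
      rw [h5]
      generalize 2 * (m : ℝ) - 1 - r = D at hD
      field_simp
      ring
    rw [e3]
    have hq0 : 0 ≤ a / b := by positivity
    have hq1 : a / b ≤ 1 := (div_le_one hb0).2 hab
    have hf : ((r : ℝ) + 1) / (2 * (2 * m - 1 - r)) ≤ 2 * (r + 1) / (2 * m) := by
      apply (div_le_div_iff₀ (by linarith) (by linarith)).2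
      nlinarith
    have hf0 : 0 ≤ ((r : ℝ) + 1) / (2 * (2 * m - 1 - r)) := by positivity
    refine (abs_add_le _ _).trans ?_
    rw [abs_neg, abs_mul, abs_mul, abs_of_nonneg hq0, abs_of_nonneg hf0, add_div K]
    have : |(1 / 2 : ℝ)| = 1 / 2 := by norm_num
    rw [this]
    have hA := abs_nonneg (a / b - 1 / 2 ^ r)
    nlinarith [mul_le_mul_of_nonneg_right hq1 hf0]

theorem choose_lower (N r : ℕ) (hr : r ≤ N) :
    ((N : ℝ) + 1) ≤ ((N + 1).choose (r + 1) : ℝ) * (r + 1) := by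
  have h := Nat.add_one_mul_choose_eq N r
  have h1 : 1 ≤ N.choose r := Nat.choose_pos hr
  have : N + 1 ≤ (N + 1).choose (r + 1) * (r + 1) := by nlinarith
  exact_mod_cast this

theorem eventually_small (k : ℕ) (hk : 2 ≤ k) (α : ℝ) (hα : 0 < α) :
    ∃ N : ℕ, ∀ m, N ≤ m → pParam k α (2 * m) ≤ 1 := by
  have h1 := Real.isLittleO_log_id_atTop.bound
    (show (0 : ℝ) < 1 / (2 * α * k) by
      have : (0 : ℝ) < k := by exact_mod_cast (by omega : 0 < k)
      positivity)
  have h2 : Tendsto (fun m : ℕ => ((2 * m : ℕ) : ℝ)) atTop atTop :=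
    tendsto_natCast_atTop_atTop.comp (tendsto_id.const_mul_atTop' (by norm_num))
  obtain ⟨N, hN⟩ := eventually_atTop.1 (h2.eventually h1)
  refine ⟨max N (k + 1), fun m hm => ?_⟩
  have h3 := hN m (le_trans (le_max_left _ _) hm)
  have hm1 : k + 1 ≤ m := le_trans (le_max_right _ _) hm
  obtain ⟨r, rfl⟩ : ∃ r, k = r + 2 := ⟨k - 2, by omega⟩
  obtain ⟨M, hM⟩ : ∃ M, 2 * m = M + 2 := ⟨2 * m - 2, by omega⟩
  unfold pParam
  rw [hM] at h3 ⊢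
  have h4 := choose_lower M r (by omega)
  have hc : (0 : ℝ) < ((M + 2 - 1).choose (r + 2 - 1) : ℝ) := by
    exact_mod_cast Nat.choose_pos (by omega)
  rw [div_le_one hc]
  simp only [Real.norm_eq_abs, id] at h3
  have h5 := (le_abs_self _).trans h3
  have h6 : |((M + 2 : ℕ) : ℝ)| = M + 2 := by
    rw [abs_of_nonneg (Nat.cast_nonneg _)]; push_cast; ring
  rw [h6] at h5
  change (M : ℝ) + 1 ≤ ((M + 2 - 1).choose (r + 2 - 1) : ℝ) * (r + 1) at h4
  set Cc := ((M + 2 - 1).choose (r + 2 - 1) : ℝ)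
  have h7 := mul_le_mul_of_nonneg_left h5 hα.le
  have h8 : α * (1 / (2 * α * ((r + 2 : ℕ) : ℝ)) * (M + 2)) = (M + 2) / (2 * (r + 2)) := by
    push_cast; field_simp
  rw [h8] at h7
  refine h7.trans ?_
  rw [div_le_iff₀ (by positivity)]
  have : (0 : ℝ) ≤ M := Nat.cast_nonneg _
  nlinarith

theorem sgn_sum_zero {m : ℕ} (σ : Fin (2 * m) → Bool) (hσ : balanced σ) : ∑ i, sgn σ i = 0 := by
  have h1 : (Finset.univ.filter (fun i => σ i = true)).card = m := by
    unfold balanced at hσ; omega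
  have : ∀ i, sgn σ i = 2 * (if σ i = true then (1 : ℝ) else 0) - 1 := by
    intro i; unfold sgn; split_ifs <;> norm_num
  simp only [this, Finset.sum_sub_distrib, ← Finset.mul_sum, Finset.sum_boole, h1]
  simp

theorem class_card {m : ℕ} (σ : Fin (2 * m) → Bool) (hσ : balanced σ) (i : Fin (2 * m)) :
    (Finset.univ.filter (fun j => σ j = σ i)).card = m := by
  have h1 : (Finset.univ.filter (fun i => σ i = true)).card = m := by
    unfold balanced at hσ; omega
  have h2 := Finset.card_filter_add_card_filter_not (s := Finset.univ) (fun i => σ i = true)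
  rw [h1, Finset.card_univ, Fintype.card_fin] at h2
  cases h : σ i
  · simp only [Bool.not_eq_true] at h2
    omega
  · exact h1

theorem large_bound (k : ℕ) (hk : 2 ≤ k) (α β : ℝ) (hα : 0 < α) (hβ : 0 < β) :
    ∃ C : ℝ, ∃ N : ℕ, 0 ≤ C ∧ ∀ m : ℕ, N ≤ m → ∀ σ : Fin (2 * m) → Bool, balanced σ →
      opNorm (varMat (2 * m) k (pParam k α (2 * m)) (pParam k β (2 * m)) σ)
        ≤ 2 * ((k : ℝ) - 1) * (((k : ℝ) / 2 ^ k) * α + (1 - (k : ℝ) / 2 ^ k) * β) *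
            Real.log (2 * m)
          + C * (Real.log (2 * m) / ((2 * m : ℕ) : ℝ)) := by
  obtain ⟨Na, ha⟩ := eventually_small k hk α hα
  obtain ⟨Nb, hb⟩ := eventually_small k hk β hβ
  obtain ⟨K, hK, hR⟩ := ratio_bound (k - 1)
  have hk1 : (1 : ℝ) ≤ (k : ℝ) - 1 := by
    have : (2 : ℝ) ≤ k := by exact_mod_cast hk
    linarith
  have hk0 : (0 : ℝ) < k := by linarith
  set C : ℝ := |α - β| * (k * ((k : ℝ) - 1)) * K + 6 * (k * ((k : ℝ) - 1)) * (α + β) with hC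
  have hkk : (0 : ℝ) ≤ k * ((k : ℝ) - 1) := mul_nonneg hk0.le (by linarith)
  have hC0 : 0 ≤ C := by
    rw [hC]
    have := mul_nonneg (mul_nonneg (abs_nonneg (α - β)) hkk) hK
    have := mul_nonneg (mul_nonneg (by norm_num : (0 : ℝ) ≤ 6) hkk) (by linarith : 0 ≤ α + β)
    linarith
  refine ⟨C, max (max Na Nb) (k + 1), hC0, fun m hm σ hσ => ?_⟩
  have hmk : k + 1 ≤ m := le_trans (le_max_right _ _) hm
  have hp1 := ha m (le_trans (le_trans (le_max_left _ _) (le_max_left _ _)) hm)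
  have hq1 := hb m (le_trans (le_trans (le_max_right _ _) (le_max_left _ _)) hm)
  have hcast : ((2 * m : ℕ) : ℝ) = 2 * m := by push_cast; ring
  have hm1 : (1 : ℝ) ≤ m := by exact_mod_cast (by omega : 1 ≤ m)
  set L := Real.log (2 * m) with hL
  have hL0 : 0 ≤ L := Real.log_nonneg (by linarith)
  set Cc : ℝ := ((2 * m - 1).choose (k - 1) : ℝ) with hCc
  have hCc0 : 0 < Cc := by rw [hCc]; exact_mod_cast Nat.choose_pos (by omega)
  have hp : pParam k α (2 * m) = α * L / Cc := by unfold pParam; rw [hcast]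
  have hq : pParam k β (2 * m) = β * L / Cc := by unfold pParam; rw [hcast]
  have hN1 : NN (2 * m) k 1 = Cc := by unfold NN; rw [if_pos (by omega)]
  have hN : (((2 * m : ℕ) : ℝ) - 1) * NN (2 * m) k 2 = ((k : ℝ) - 1) * NN (2 * m) k 1 := by
    unfold NN
    rw [if_pos hk, if_pos (by omega)]
    obtain ⟨r, rfl⟩ : ∃ r, k = r + 2 := ⟨k - 2, by omega⟩
    obtain ⟨M, hM⟩ : ∃ M, 2 * m = M + 2 := ⟨2 * m - 2, by omega⟩
    rw [hM]
    have h : ((M : ℝ) + 1) * (M.choose r : ℝ) = ((M + 1).choose (r + 1) : ℝ) * (r + 1) := by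
      exact_mod_cast Nat.add_one_mul_choose_eq M r
    change (((M + 2 : ℕ) : ℝ) - 1) * (M.choose r : ℝ) =
      (((r + 2 : ℕ) : ℝ) - 1) * ((M + 1).choose (r + 1) : ℝ)
    push_cast
    linarith
  have h2k : (k : ℝ) / 2 ^ k ≤ 1 := by
    rw [div_le_one (by positivity)]
    exact_mod_cast (Nat.lt_two_pow_self (n := k)).le
  have h2k0 : 0 ≤ (k : ℝ) / 2 ^ k := by positivity
  have hn0 : (0 : ℝ) < 2 * m := by linarith
  rw [hcast] at hN ⊢
  refine main_bound (by omega) k (by omega) m (by omega) _ _ ?_ ?_ hp1 hq1 σ (sgn_sum_zero σ hσ)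
    (class_card σ hσ) (by rw [hcast]; exact hN) _ ?_ ?_
  · rw [hp]; positivity
  · rw [hq]; positivity
  · apply add_nonneg
    · refine mul_nonneg (mul_nonneg (by linarith) (add_nonneg (mul_nonneg h2k0 hα.le)
        (mul_nonneg (by linarith) hβ.le))) hL0
    · exact mul_nonneg hC0 (by positivity)
  · have hr := hR m (by omega)
    rw [← hCc] at hr
    set R := ((m - 1).choose (k - 1) : ℝ) / Cc with hRd
    have hN2 : NN (2 * m) k 2 = ((k : ℝ) - 1) * Cc / (2 * m - 1) := by
      rw [eq_div_iff (by linarith), ← hN1, ← hN]; ring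
    have h2 : (2 : ℝ) ^ k = 2 * 2 ^ (k - 1) := by
      rw [← pow_succ', Nat.sub_add_cancel (by omega)]
    rw [hp, hq, hN1, hN2]
    have t1 : β * L / Cc * (2 * ((k : ℝ) - 1) * Cc) = 2 * ((k : ℝ) - 1) * β * L := by field_simp
    have t2 : (α * L / Cc - β * L / Cc) * (k * ((k : ℝ) - 1) * ((m - 1).choose (k - 1) : ℝ)) =
        (k * ((k : ℝ) - 1)) * L * ((α - β) * R) := by rw [hRd]; field_simp
    have hne : (2 : ℝ) * m - 1 ≠ 0 := by linarith
    have t3 : (α * L / Cc + β * L / Cc) * (3 * k) * (((k : ℝ) - 1) * Cc / (2 * m - 1)) =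
        3 * (k * ((k : ℝ) - 1)) * (α + β) * (L / (2 * m - 1)) := by field_simp
    have t4 : L / (2 * m - 1) ≤ 2 * (L / (2 * m)) := by
      rw [← mul_div_assoc, div_le_div_iff₀ (by linarith) hn0]
      nlinarith
    have t5 : (α - β) * R ≤ (α - β) * (1 / 2 ^ (k - 1)) + |α - β| * (K / (2 * m)) := by
      have : (α - β) * (R - 1 / 2 ^ (k - 1)) ≤ |α - β| * (K / (2 * m)) := by
        refine (le_abs_self _).trans ?_
        rw [abs_mul]
        exact mul_le_mul_of_nonneg_left hr (abs_nonneg _)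
      linarith
    rw [t1, t2, t3, h2]
    have t6 := mul_le_mul_of_nonneg_left t5 (mul_nonneg hkk hL0)
    have t7 := mul_le_mul_of_nonneg_left t4
      (mul_nonneg (mul_nonneg (by norm_num : (0 : ℝ) ≤ 3) hkk) (by linarith : 0 ≤ α + β))
    refine (add_le_add (add_le_add le_rfl t6) t7).trans (le_of_eq ?_)
    rw [hC]
    field_simp
    ring

/-- For balanced `σ`, the variance parameter satisfies
`σ² ≤ 2(k-1)((k/2^k)α + (1-k/2^k)β) log n + O(log n / n)`. -/
theorem variance_parameter_bound (k : ℕ) (hk : 2 ≤ k) (α β : ℝ) (hα : 0 < α) (hβ : 0 < β) :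
    ∃ C : ℝ, ∀ m : ℕ, ∀ σ : Fin (2 * m) → Bool, balanced σ →
      opNorm (varMat (2 * m) k (pParam k α (2 * m)) (pParam k β (2 * m)) σ)
        ≤ 2 * ((k : ℝ) - 1) * (((k : ℝ) / 2 ^ k) * α + (1 - (k : ℝ) / 2 ^ k) * β) *
            Real.log (2 * m)
          + C * (Real.log (2 * m) / ((2 * m : ℕ) : ℝ)) := by
  obtain ⟨C, N, hC0, hC⟩ := large_bound k hk α β hα hβ
  have hsmall : ∀ m : ℕ, ∃ D : ℝ, 0 ≤ D ∧ ∀ σ : Fin (2 * m) → Bool,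
      opNorm (varMat (2 * m) k (pParam k α (2 * m)) (pParam k β (2 * m)) σ)
        ≤ 2 * ((k : ℝ) - 1) * (((k : ℝ) / 2 ^ k) * α + (1 - (k : ℝ) / 2 ^ k) * β) *
            Real.log (2 * m)
          + D * (Real.log (2 * m) / ((2 * m : ℕ) : ℝ)) := by
    intro m
    rcases Nat.eq_zero_or_pos m with rfl | hm
    · refine ⟨0, le_rfl, fun σ => ?_⟩
      simp only [Nat.cast_zero, mul_zero, Real.log_zero, zero_mul, add_zero]
      unfold opNorm
      apply Real.sSup_le _ le_rfl
      rintro r ⟨x, hx, -⟩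
      exfalso
      have : IsEmpty (Fin (2 * 0)) := by simp; infer_instance
      rw [Finset.univ_eq_empty, Finset.sum_empty] at hx
      norm_num at hx
    · have hm1 : (1 : ℝ) ≤ m := by exact_mod_cast hm
      have hl : 0 < Real.log (2 * m) / ((2 * m : ℕ) : ℝ) := by
        push_cast
        exact div_pos (Real.log_pos (by linarith)) (by linarith)
      set w := Real.log (2 * m) / ((2 * m : ℕ) : ℝ)
      set A := 2 * ((k : ℝ) - 1) * (((k : ℝ) / 2 ^ k) * α + (1 - (k : ℝ) / 2 ^ k) * β) *
            Real.log (2 * m)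
      let f : (Fin (2 * m) → Bool) → ℝ := fun σ =>
        |(opNorm (varMat (2 * m) k (pParam k α (2 * m)) (pParam k β (2 * m)) σ) - A) / w|
      refine ⟨∑ σ, f σ, Finset.sum_nonneg fun σ _ => abs_nonneg _, fun σ => ?_⟩
      have h1 : f σ ≤ ∑ σ, f σ :=
        Finset.single_le_sum (fun τ _ => abs_nonneg _) (Finset.mem_univ σ)
      have h2 := (le_abs_self _).trans h1
      rw [div_le_iff₀ hl] at h2
      linarith
  choose D hD0 hD using hsmall
  refine ⟨C + ∑ j ∈ Finset.range N, D j, fun m σ hσ => ?_⟩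
  have hw : 0 ≤ Real.log (2 * m) / ((2 * m : ℕ) : ℝ) := by
    have := Real.log_natCast_nonneg (2 * m)
    push_cast at this ⊢
    positivity
  have hS : 0 ≤ ∑ j ∈ Finset.range N, D j := Finset.sum_nonneg fun j _ => hD0 j
  rcases le_or_gt N m with h | h
  · refine (hC m h σ hσ).trans ?_
    gcongr
    linarith
  · refine (hD m σ).trans ?_
    gcongr
    have := Finset.single_le_sum (f := D) (fun j _ => hD0 j) (Finset.mem_range.2 h)
    linarith
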